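/- arXiv:1203.0253 — 2 statements merged into one kernel-verified Lean document; each statement's English description precedes it below -/
import Mathlib

section
/- Let f ∈ ℚ[X₁,…,Xₙ], let e ≥ 0 be an integer, set d = e + ⌈deg(f)/2⌉, and let 𝒯 be any subset of the set of monomials of total degree ≤ e. Then the following are equivalent: (1) f ∉ RSOS(𝒯); (2) there exists a rational sequence ŷ = (ŷ_α) ∈ ℚ^m, indexed by multi-indices α ∈ ℕⁿ with |α| ≤ 2d (so m = C(n+2d, 2d)), such that the moment matrix M_d(ŷ) is positive semidefinite and the localizing moment matrix M_e(fŷ), with rows and columns indexed by the exponents of the monomials in 𝒯, is negative definite. -/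
open MvPolynomial

/-- Exponent multi-indices in `n` variables of total degree at most `d`
(the exponents of the monomials of total degree `≤ d`). -/
abbrev Idx (n d : ℕ) : Type := {α : Fin n →₀ ℕ // α.degree ≤ d}

noncomputable instance (n d : ℕ) : Fintype (Idx n d) :=
  Set.Finite.fintype (s := {α : Fin n →₀ ℕ | α.degree ≤ d}) <| by
    apply Set.Finite.subset
      (Set.finite_Iic (Finsupp.equivFunOnFinite.symm fun _ : Fin n => d))
    intro α hα
    simp only [Set.mem_Iic, Finsupp.le_def]
    intro i
    exact le_trans (Finsupp.le_degree i α) hα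

/-- `f ∈ RSOS(𝒯)` : there are polynomials `u₁,…,u_l, v₁,…,v_{l'}` with
`supp(vⱼ) ⊆ 𝒯` for all `j` and `Σⱼ vⱼ² ≠ 0` such that `f · Σⱼ vⱼ² = Σᵢ uᵢ²`. -/
def RSOS (n : ℕ) (𝒯 : Finset (Fin n →₀ ℕ)) (f : MvPolynomial (Fin n) ℝ) : Prop :=
  ∃ (l l' : ℕ) (u : Fin l → MvPolynomial (Fin n) ℝ)
    (v : Fin l' → MvPolynomial (Fin n) ℝ),
    (∀ j, (v j).support ⊆ 𝒯) ∧ (∑ j, v j ^ 2) ≠ 0 ∧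
      f * (∑ j, v j ^ 2) = ∑ i, u i ^ 2

/-- `f/g ∈ RSOS(𝒯)` for a rational function `f/g` : there are polynomials
`u₁,…,u_l, v₁,…,v_{l'}` with `supp(vⱼ) ⊆ 𝒯` for all `j` and `Σⱼ vⱼ² ≠ 0`
such that `f · Σⱼ vⱼ² = g · Σᵢ uᵢ²`. -/
def RSOSfrac (n : ℕ) (𝒯 : Finset (Fin n →₀ ℕ)) (f g : MvPolynomial (Fin n) ℝ) : Prop :=
  ∃ (l l' : ℕ) (u : Fin l → MvPolynomial (Fin n) ℝ)
    (v : Fin l' → MvPolynomial (Fin n) ℝ),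
    (∀ j, (v j).support ⊆ 𝒯) ∧ (∑ j, v j ^ 2) ≠ 0 ∧
      f * (∑ j, v j ^ 2) = g * ∑ i, u i ^ 2

/-- The moment matrix of order `t` of a sequence `y`, with rows and columns
indexed by multi-indices of degree `≤ t` and `(α,β)` entry `y_{α+β}`. -/
noncomputable def momentMatrix (n t : ℕ) (y : (Fin n →₀ ℕ) → ℝ) :
    Matrix (Idx n t) (Idx n t) ℝ :=
  fun α β => y (α.1 + β.1)

/-- The localizing moment matrix `M_t(qy)` of order `t`, with `(α,β)` entry
`Σ_γ q_γ y_{γ+α+β}`. -/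
noncomputable def locMomentMatrix (n t : ℕ) (q : MvPolynomial (Fin n) ℝ)
    (y : (Fin n →₀ ℕ) → ℝ) : Matrix (Idx n t) (Idx n t) ℝ :=
  fun α β => ∑ γ ∈ q.support, q.coeff γ * y (γ + α.1 + β.1)

/-- The localizing moment matrix `M(qy)` with rows and columns indexed by the
exponents of the monomials in `𝒯`, with `(α,β)` entry `Σ_γ q_γ y_{γ+α+β}`. -/
noncomputable def locMomentMatrixOn (n : ℕ) (𝒯 : Finset (Fin n →₀ ℕ))
    (q : MvPolynomial (Fin n) ℝ) (y : (Fin n →₀ ℕ) → ℝ) : Matrix 𝒯 𝒯 ℝ :=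
  fun α β => ∑ γ ∈ q.support, q.coeff γ * y (γ + α.1 + β.1)

/-- The linear form `L_y(p) = Σ_α y_α p_α` associated to a sequence `y`. -/
noncomputable def LForm (n : ℕ) (y : (Fin n →₀ ℕ) → ℝ)
    (p : MvPolynomial (Fin n) ℝ) : ℝ :=
  ∑ α ∈ p.support, y α * p.coeff α

/-- `p` is a sum of squares of polynomials. -/
def IsSOS (n : ℕ) (p : MvPolynomial (Fin n) ℝ) : Prop :=
  ∃ (l : ℕ) (u : Fin l → MvPolynomial (Fin n) ℝ), p = ∑ i, u i ^ 2

open Topology Matrix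

/-!
If `f ∉ RSOS(𝒯)`, then the quadratic map `q (p, v) = p² - f v²`, with `deg p ≤ d` and `supp v ⊆ 𝒯`,
satisfies no relation `∑ᵢ q (pᵢ, vᵢ) = 0` other than the trivial one. Hence the convex hull of the
values of `q` on the unit sphere is a compact set not containing `0`, and the Hahn–Banach theorem
gives a linear form `L` that is positive on all nonzero values of `q`. Its moments `y α = L (X^α)`
make both `M_d(y)` and `-M(fy)` positive definite. This is an open condition on `y`, so it also
holds for some rational sequence. Conversely, applying the functional `X^α ↦ y α` to an identity
`f ∑ⱼ vⱼ² = ∑ᵢ uᵢ²` would give a negative number on the left and a nonnegative one on the right.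
-/

section ConvexGeometry
variable {E : Type*} [AddCommGroup E] [Module ℝ E] [TopologicalSpace E]

theorem isCompact_convexHull_of_finiteDimensional [ContinuousAdd E] [ContinuousSMul ℝ E]
    [FiniteDimensional ℝ E] {s : Set E} (hs : IsCompact s) : IsCompact (convexHull ℝ s) := by
  let convexCombinations (k : ℕ) : Set E :=
    (fun p : (Fin k → ℝ) × (Fin k → E) => ∑ i, p.1 i • p.2 i) ''
      (stdSimplex ℝ (Fin k) ×ˢ Set.univ.pi fun _ => s)
  have isCompact_convexCombinations (k : ℕ) : IsCompact (convexCombinations k) :=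
    ((isCompact_stdSimplex ℝ (Fin k)).prod (isCompact_univ_pi fun _ => hs)).image (by fun_prop)
  have caratheodory : convexHull ℝ s = ⋃ k ≤ Module.finrank ℝ E + 1, convexCombinations k := by
    refine Set.Subset.antisymm (fun x hx => ?_) (Set.iUnion₂_subset fun k _ => ?_)
    · obtain ⟨ι, _, z, w, hz, hind, hw, hw1, rfl⟩ := eq_pos_convex_span_of_mem_convexHull hx
      let e := (Fintype.equivFin ι).symm
      have hcard : Fintype.card ι ≤ Module.finrank ℝ E + 1 :=
        hind.card_le_finrank_succ.trans (by gcongr; exact Submodule.finrank_le _)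
      refine Set.mem_iUnion₂.mpr ⟨_, hcard, (w ∘ e, z ∘ e), ⟨⟨fun i => (hw _).le, ?_⟩,
        fun i _ => hz ⟨_, rfl⟩⟩, e.sum_comp fun i => w i • z i⟩
      exact (e.sum_comp w).trans hw1
    · rintro _ ⟨⟨w, z⟩, ⟨⟨hw, hw1⟩, hz⟩, rfl⟩
      exact mem_convexHull_of_exists_fintype w z hw hw1 (fun i => hz i trivial) rfl
  rw [caratheodory]
  exact (Set.finite_Iic _).isCompact_biUnion fun k _ => isCompact_convexCombinations k

variable [IsTopologicalAddGroup E] [ContinuousSMul ℝ E] [LocallyConvexSpace ℝ E] [T2Space E]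
  [FiniteDimensional ℝ E]

theorem exists_forall_pos_of_zero_notMem_convexHull {K : Set E} (hK : IsCompact K)
    (h0 : (0 : E) ∉ convexHull ℝ K) : ∃ φ : StrongDual ℝ E, ∀ x ∈ K, 0 < φ x := by
  obtain ⟨φ, c, hc0, hc⟩ := geometric_hahn_banach_point_closed (convex_convexHull ℝ K)
    (isCompact_convexHull_of_finiteDimensional hK).isClosed h0
  rw [map_zero] at hc0
  exact ⟨φ, fun x hx => hc0.trans (hc x (subset_convexHull ℝ K hx))⟩

theorem exists_forall_pos_of_sum_eq_zero {V : Type*} [NormedAddCommGroup V] [NormedSpace ℝ V]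
    [ProperSpace V] {q : V → E} (hq : Continuous q)
    (hsmul : ∀ (c : ℝ) (v : V), q (c • v) = c ^ 2 • q v)
    (hsum : ∀ (k : ℕ) (v : Fin k → V), ∑ i, q (v i) = 0 → ∀ i, v i = 0) :
    ∃ φ : StrongDual ℝ E, ∀ v ≠ 0, 0 < φ (q v) := by
  have h0 : (0 : E) ∉ convexHull ℝ (q '' Metric.sphere 0 1) := fun h => by
    obtain ⟨ι, _, w, x, hw, hw1, hx, hwx⟩ := mem_convexHull_iff_exists_fintype.mp h
    choose v hv hvx using hx
    let e := (Fintype.equivFin ι).symm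
    -- Homogeneity turns the convex combination `∑ wᵢ q(vᵢ)` into the sum `∑ q(√wᵢ vᵢ)`.
    have hscaled : ∀ i, √(w i) • v i = 0 := by
      have := hsum _ (fun j => √(w (e j)) • v (e j)) <| by
        rw [e.sum_comp fun i => q (√(w i) • v i), ← hwx]
        exact Finset.sum_congr rfl fun i _ => by rw [hsmul, Real.sq_sqrt (hw i), hvx]
      exact fun i => by simpa using this (e.symm i)
    have hw0 : ∀ i, w i = 0 := fun i => by
      have hvi : v i ≠ 0 := ne_zero_of_mem_unit_sphere ⟨v i, hv i⟩
      simpa [hvi, Real.sqrt_eq_zero (hw i)] using hscaled i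
    simp [hw0] at hw1
  obtain ⟨φ, hφ⟩ :=
    exists_forall_pos_of_zero_notMem_convexHull ((isCompact_sphere 0 1).image hq) h0
  refine ⟨φ, fun v hv => ?_⟩
  have hunit : 0 < φ (q (‖v‖⁻¹ • v)) :=
    hφ _ ⟨_, by simpa using norm_smul_inv_norm (𝕜 := ℝ) hv, rfl⟩
  rw [hsmul, map_smul, smul_eq_mul] at hunit
  exact pos_of_mul_pos_right hunit (sq_nonneg _)

end ConvexGeometry

theorem eventually_posDef {X ι : Type*} [TopologicalSpace X] [Finite ι]
    {M : X → Matrix ι ι ℝ} {x₀ : X} (hM : ContinuousAt M x₀)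
    (hherm : ∀ x, (M x).IsHermitian) (h₀ : (M x₀).PosDef) : ∀ᶠ x in 𝓝 x₀, (M x).PosDef := by
  cases nonempty_fintype ι
  have hsphere : ∀ᶠ N in 𝓝 (M x₀), ∀ v ∈ Metric.sphere (0 : ι → ℝ) 1, 0 < v ⬝ᵥ (N *ᵥ v) := by
    refine (isCompact_sphere _ _).eventually_forall_of_forall_eventually fun v hv => ?_
    have hcont : Continuous fun p : Matrix ι ι ℝ × (ι → ℝ) => p.2 ⬝ᵥ (p.1 *ᵥ p.2) := by fun_prop
    refine hcont.continuousAt.eventually (lt_mem_nhds ?_)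
    simpa using h₀.dotProduct_mulVec_pos (ne_zero_of_mem_unit_sphere ⟨v, hv⟩)
  filter_upwards [hM.eventually hsphere] with x hx
  refine .of_dotProduct_mulVec_pos (hherm x) fun v hv => ?_
  have hunit := hx (‖v‖⁻¹ • v) (by simpa using norm_smul_inv_norm (𝕜 := ℝ) hv)
  rw [mulVec_smul, smul_dotProduct, dotProduct_smul, smul_smul, smul_eq_mul] at hunit
  exact pos_of_mul_pos_right hunit (mul_self_nonneg _)

section SumsOfSquares
variable {σ R ι : Type*} [Field R] [LinearOrder R] [IsStrictOrderedRing R]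
  {s : Finset ι} {u : ι → MvPolynomial σ R} {i : ι}

theorem eq_zero_of_sum_sq_eq_zero (h : ∑ j ∈ s, u j ^ 2 = 0) (hi : i ∈ s) : u i = 0 := by
  refine MvPolynomial.funext fun x => ?_
  have hx : ∑ j ∈ s, eval x (u j) ^ 2 = 0 := by simpa using congrArg (eval x) h
  simpa using (Finset.sum_eq_zero_iff_of_nonneg fun j _ => sq_nonneg _).mp hx i hi

theorem two_mul_totalDegree_le_totalDegree_sum_sq [LinearOrder σ] [WellFoundedGT σ]
    (hi : i ∈ s) : 2 * (u i).totalDegree ≤ (∑ j ∈ s, u j ^ 2).totalDegree := by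
  obtain ⟨k, hk, hmax⟩ := s.exists_max_image
    (fun j => MonomialOrder.degLex.toSyn (MonomialOrder.degLex.degree (u j))) ⟨i, hi⟩
  have hik : (u i).totalDegree ≤ (u k).totalDegree := degLex_totalDegree_monotone (hmax i hi)
  obtain hk0 | hk0 := eq_or_ne (u k) 0
  · simp_all
  -- The leading coefficients of the squares are nonnegative, so they cannot cancel.
  set a := MonomialOrder.degLex.degree (u k)
  have hcoeff : coeff (a + a) (∑ j ∈ s, u j ^ 2) = ∑ j ∈ s, coeff a (u j) ^ 2 := by
    rw [coeff_sum]
    refine Finset.sum_congr rfl fun j hj => ?_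
    rw [sq, sq, MonomialOrder.coeff_mul_of_add_of_degree_le (hmax j hj) (hmax j hj)]
  have hpos : 0 < ∑ j ∈ s, coeff a (u j) ^ 2 := by
    have hka : coeff a (u k) ≠ 0 :=
      mem_support_iff.mp (MonomialOrder.degree_mem_support hk0)
    exact Finset.sum_pos' (fun _ _ => sq_nonneg _) ⟨k, hk, by positivity⟩
  calc 2 * (u i).totalDegree ≤ 2 * (u k).totalDegree := by gcongr
    _ = (a + a).degree := by rw [map_add, degree_degLexDegree, two_mul]
    _ ≤ _ := le_totalDegree (mem_support_iff.mpr (hcoeff ▸ hpos.ne'))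

end SumsOfSquares

section Coefficients
variable {σ ι R : Type*} [Fintype ι] [CommSemiring R]

/-- The polynomial `∑ᵢ xᵢ X^{aᵢ}` with coefficient vector `x` along the exponents `a`. -/
noncomputable def polyOfCoeffs (a : ι → σ →₀ ℕ) : (ι → R) →ₗ[R] MvPolynomial σ R :=
  Fintype.linearCombination R fun i => monomial (a i) 1

theorem polyOfCoeffs_injective {a : ι → σ →₀ ℕ} (ha : Function.Injective a) :
    Function.Injective (polyOfCoeffs (R := R) a) :=
  linearIndependent_iff_injective_fintypeLinearCombination.mp <| by
    simpa [Function.comp_def] using (basisMonomials σ R).linearIndependent.comp a ha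

theorem range_polyOfCoeffs (a : ι → σ →₀ ℕ) :
    (polyOfCoeffs (R := R) a).range = restrictSupport R (Set.range a) := by
  rw [polyOfCoeffs, Fintype.range_linearCombination, restrictSupport_eq_span, ← Set.range_comp]
  rfl

theorem support_polyOfCoeffs_subset (a : ι → σ →₀ ℕ) (x : ι → R) :
    ↑(polyOfCoeffs a x).support ⊆ Set.range a :=
  (mem_restrictSupport_iff R).mp (range_polyOfCoeffs (R := R) a ▸ LinearMap.mem_range_self _ x)

theorem support_polyOfCoeffs_val_subset {s : Finset (σ →₀ ℕ)} (x : s → R) :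
    (polyOfCoeffs Subtype.val x).support ⊆ s := by
  simpa using support_polyOfCoeffs_subset (Subtype.val : s → σ →₀ ℕ) x

end Coefficients

section RieszFunctional
variable {σ R : Type*} [CommSemiring R]

/-- The Riesz functional `X^α ↦ y α` of a sequence `y`. -/
noncomputable def rieszFunctional (y : (σ →₀ ℕ) → R) : MvPolynomial σ R →ₗ[R] R :=
  (basisMonomials σ R).constr R y

@[simp]
theorem rieszFunctional_monomial (y : (σ →₀ ℕ) → R) (α : σ →₀ ℕ) (c : R) :
    rieszFunctional y (monomial α c) = c * y α := by
  have := (basisMonomials σ R).constr_basis R y α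
  rw [← mul_one c, ← smul_eq_mul, ← smul_monomial, map_smul]
  simpa [rieszFunctional] using congrArg (c * ·) this

theorem rieszFunctional_apply_monomial (L : MvPolynomial σ R →ₗ[R] R) :
    rieszFunctional (fun α => L (monomial α 1)) = L := by
  simpa [rieszFunctional] using (basisMonomials σ R).constr_self R L

theorem rieszFunctional_mul_monomial (y : (σ →₀ ℕ) → R) (f : MvPolynomial σ R) (α : σ →₀ ℕ) :
    rieszFunctional y (f * monomial α 1) = ∑ γ ∈ f.support, coeff γ f * y (γ + α) := by
  conv_lhs => rw [f.as_sum, Finset.sum_mul, map_sum]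
  simp only [monomial_mul, mul_one, rieszFunctional_monomial]

end RieszFunctional

section MomentForm
variable {σ ι R : Type*} [CommSemiring R]

/-- The matrix of the quadratic form `p ↦ L (f p²)` on the span of the monomials with exponents
`a`. It is a moment matrix for `f = 1` and a localizing moment matrix in general. -/
noncomputable def momentForm (L : MvPolynomial σ R →ₗ[R] R) (f : MvPolynomial σ R)
    (a : ι → σ →₀ ℕ) : Matrix ι ι R :=
  .of fun i j => L (f * monomial (a i + a j) 1)

theorem dotProduct_momentForm_mulVec [Fintype ι] (L : MvPolynomial σ R →ₗ[R] R)
    (f : MvPolynomial σ R) (a : ι → σ →₀ ℕ) (x : ι → R) :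
    x ⬝ᵥ (momentForm L f a *ᵥ x) = L (f * polyOfCoeffs a x ^ 2) := by
  have expand : f * polyOfCoeffs a x ^ 2 =
      ∑ i, ∑ j, (x i * x j) • (f * monomial (a i + a j) 1) := by
    rw [polyOfCoeffs, Fintype.linearCombination_apply, sq, Finset.sum_mul_sum,
      Finset.mul_sum]
    simp only [Finset.mul_sum, smul_mul_smul_comm, monomial_mul, mul_one]
    simp only [mul_smul_comm]
  simp only [expand, map_sum, map_smul, smul_eq_mul, dotProduct, mulVec, momentForm, of_apply,
    Finset.mul_sum]
  exact Finset.sum_congr rfl fun i _ => Finset.sum_congr rfl fun j _ => by ring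

variable {L : MvPolynomial σ ℝ →ₗ[ℝ] ℝ} {f : MvPolynomial σ ℝ} {a : ι → σ →₀ ℕ}

theorem momentForm_isHermitian : (momentForm L f a).IsHermitian := by
  ext i j
  simp [momentForm, add_comm]

theorem momentForm_posSemidef_iff [Finite ι] : (momentForm L f a).PosSemidef ↔
    ∀ p ∈ restrictSupport ℝ (Set.range a), 0 ≤ L (f * p ^ 2) := by
  cases nonempty_fintype ι
  rw [posSemidef_iff_dotProduct_mulVec, and_iff_right momentForm_isHermitian]
  simp [dotProduct_momentForm_mulVec, ← range_polyOfCoeffs]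

theorem momentForm_posDef_iff [Finite ι] (ha : Function.Injective a) :
    (momentForm L f a).PosDef ↔
      ∀ p ∈ restrictSupport ℝ (Set.range a), p ≠ 0 → 0 < L (f * p ^ 2) := by
  cases nonempty_fintype ι
  rw [posDef_iff_dotProduct_mulVec, and_iff_right momentForm_isHermitian]
  simp [dotProduct_momentForm_mulVec, ← range_polyOfCoeffs,
    map_eq_zero_iff _ (polyOfCoeffs_injective ha)]

end MomentForm

section MomentMatrix
variable {n : ℕ}

theorem momentMatrix_eq_momentForm (t : ℕ) (y : (Fin n →₀ ℕ) → ℝ) :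
    momentMatrix n t y = momentForm (rieszFunctional y) 1 Subtype.val := by
  ext α β
  simp [momentMatrix, momentForm]

theorem neg_locMomentMatrixOn_eq_momentForm (𝒯 : Finset (Fin n →₀ ℕ))
    (f : MvPolynomial (Fin n) ℝ) (y : (Fin n →₀ ℕ) → ℝ) :
    -locMomentMatrixOn n 𝒯 f y = momentForm (rieszFunctional y) (-f) Subtype.val := by
  ext α β
  simp [locMomentMatrixOn, momentForm, rieszFunctional_mul_monomial, add_assoc]

theorem momentMatrix_posSemidef_iff {t : ℕ} {y : (Fin n →₀ ℕ) → ℝ} :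
    (momentMatrix n t y).PosSemidef ↔
      ∀ p : MvPolynomial (Fin n) ℝ, p.totalDegree ≤ t → 0 ≤ rieszFunctional y (p ^ 2) := by
  have hspan : restrictSupport ℝ {α | α.degree ≤ t} = restrictTotalDegree (Fin n) ℝ t := rfl
  simp [momentMatrix_eq_momentForm, momentForm_posSemidef_iff, hspan, mem_restrictTotalDegree]

theorem neg_locMomentMatrixOn_posDef_iff {𝒯 : Finset (Fin n →₀ ℕ)} {f : MvPolynomial (Fin n) ℝ}
    {y : (Fin n →₀ ℕ) → ℝ} : (-locMomentMatrixOn n 𝒯 f y).PosDef ↔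
      ∀ p : MvPolynomial (Fin n) ℝ, p.support ⊆ 𝒯 → p ≠ 0 →
        rieszFunctional y (f * p ^ 2) < 0 := by
  rw [neg_locMomentMatrixOn_eq_momentForm, momentForm_posDef_iff Subtype.val_injective]
  simp [mem_restrictSupport_iff]

end MomentMatrix

theorem totalDegree_mul_sq_le {σ R : Type*} [CommSemiring R] {f v : MvPolynomial σ R} {D : ℕ}
    (hv : ∀ α ∈ v.support, f.totalDegree + 2 * α.degree ≤ D) :
    (f * v ^ 2).totalDegree ≤ D := by
  obtain rfl | hv0 := eq_or_ne v 0
  · simp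
  obtain ⟨α, hα, hdeg⟩ : ∃ α ∈ v.support, v.totalDegree = α.degree :=
    Finset.exists_mem_eq_sup _ (support_nonempty.mpr hv0) _
  calc (f * v ^ 2).totalDegree ≤ f.totalDegree + 2 * v.totalDegree :=
        (totalDegree_mul _ _).trans (by gcongr; exact totalDegree_pow _ _)
    _ ≤ D := hdeg ▸ hv α hα

section Certificates
variable {n d : ℕ} {𝒯 : Finset (Fin n →₀ ℕ)} {f : MvPolynomial (Fin n) ℝ}

theorem not_rsos_of_moments (hd : ∀ α ∈ 𝒯, f.totalDegree + 2 * α.degree ≤ 2 * d)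
    {y : (Fin n →₀ ℕ) → ℝ} (hM : (momentMatrix n d y).PosSemidef)
    (hN : (-locMomentMatrixOn n 𝒯 f y).PosDef) : ¬ RSOS n 𝒯 f := by
  rintro ⟨l, l', u, v, hv, hv0, huv⟩
  rw [momentMatrix_posSemidef_iff] at hM
  rw [neg_locMomentMatrixOn_posDef_iff] at hN
  have hdeg : (∑ i, u i ^ 2).totalDegree ≤ 2 * d := by
    rw [← huv, Finset.mul_sum]
    exact totalDegree_finsetSum_le fun j _ => totalDegree_mul_sq_le fun α hα => hd α (hv j hα)
  have hu : ∀ i, (u i).totalDegree ≤ d := fun i => by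
    have := two_mul_totalDegree_le_totalDegree_sum_sq (u := u) (Finset.mem_univ i)
    omega
  have hnonneg : 0 ≤ rieszFunctional y (∑ i, u i ^ 2) := by
    rw [map_sum]
    exact Finset.sum_nonneg fun i _ => hM _ (hu i)
  have hnonpos : ∀ j, rieszFunctional y (f * v j ^ 2) ≤ 0 := fun j => by
    obtain h | h := eq_or_ne (v j) 0
    · simp [h]
    · exact (hN _ (hv j) h).le
  obtain ⟨j, hj⟩ : ∃ j, v j ≠ 0 := by
    by_contra! h
    simp [h] at hv0
  have hneg : rieszFunctional y (f * ∑ j, v j ^ 2) < 0 := by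
    rw [Finset.mul_sum, map_sum]
    exact Finset.sum_neg' (fun j _ => hnonpos j) ⟨j, Finset.mem_univ j, hN _ (hv j) hj⟩
  exact hneg.not_ge (huv ▸ hnonneg)

/-- The quadratic map `(p, v) ↦ p² - f v²`, where `deg p ≤ d` and `supp v ⊆ 𝒯`, in terms of
coefficient vectors. -/
noncomputable def sqSubMulSq (d : ℕ) (𝒯 : Finset (Fin n →₀ ℕ)) (f : MvPolynomial (Fin n) ℝ)
    (z : (Idx n d → ℝ) × (𝒯 → ℝ)) : MvPolynomial (Fin n) ℝ :=
  polyOfCoeffs Subtype.val z.1 ^ 2 - f * polyOfCoeffs Subtype.val z.2 ^ 2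

theorem sqSubMulSq_smul (c : ℝ) (z : (Idx n d → ℝ) × (𝒯 → ℝ)) :
    sqSubMulSq d 𝒯 f (c • z) = c ^ 2 • sqSubMulSq d 𝒯 f z := by
  simp only [sqSubMulSq, Prod.smul_fst, Prod.smul_snd, map_smul, smul_pow, mul_smul_comm,
    smul_sub]

theorem continuous_linearMap_sqSubMulSq (L : MvPolynomial (Fin n) ℝ →ₗ[ℝ] ℝ) :
    Continuous fun z => L (sqSubMulSq d 𝒯 f z) := by
  have hform (z : (Idx n d → ℝ) × (𝒯 → ℝ)) : L (sqSubMulSq d 𝒯 f z) =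
      z.1 ⬝ᵥ (momentForm L 1 Subtype.val *ᵥ z.1) - z.2 ⬝ᵥ (momentForm L f Subtype.val *ᵥ z.2) := by
    simp [sqSubMulSq, dotProduct_momentForm_mulVec]
  simp only [hform]
  fun_prop

theorem totalDegree_sqSubMulSq_le (hd : ∀ α ∈ 𝒯, f.totalDegree + 2 * α.degree ≤ 2 * d)
    (z : (Idx n d → ℝ) × (𝒯 → ℝ)) : (sqSubMulSq d 𝒯 f z).totalDegree ≤ 2 * d := by
  refine (totalDegree_sub _ _).trans (max_le ?_ ?_)
  · rw [← one_mul (_ ^ 2)]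
    refine totalDegree_mul_sq_le fun α hα => ?_
    obtain ⟨β, rfl⟩ := support_polyOfCoeffs_subset _ _ hα
    simpa using β.2
  · exact totalDegree_mul_sq_le fun α hα => hd α (support_polyOfCoeffs_val_subset _ hα)

theorem eq_zero_of_sum_sqSubMulSq_eq_zero (hf : ¬ RSOS n 𝒯 f) {k : ℕ}
    {z : Fin k → (Idx n d → ℝ) × (𝒯 → ℝ)} (hz : ∑ i, sqSubMulSq d 𝒯 f (z i) = 0) (i : Fin k) :
    z i = 0 := by
  let p (i : Fin k) := polyOfCoeffs (R := ℝ) Subtype.val (z i).1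
  let v (i : Fin k) := polyOfCoeffs (R := ℝ) Subtype.val (z i).2
  have hpv : f * ∑ i, v i ^ 2 = ∑ i, p i ^ 2 := by
    rw [Finset.mul_sum, eq_comm, ← sub_eq_zero, ← Finset.sum_sub_distrib]
    exact hz
  have hv : ∑ i, v i ^ 2 = 0 := by_contra fun hv0 =>
    hf ⟨k, k, p, v, fun i => support_polyOfCoeffs_val_subset _, hv0, hpv⟩
  have hp : ∑ i, p i ^ 2 = 0 := by rw [← hpv, hv, mul_zero]
  have hpi : p i = 0 := eq_zero_of_sum_sq_eq_zero hp (Finset.mem_univ i)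
  have hvi : v i = 0 := eq_zero_of_sum_sq_eq_zero hv (Finset.mem_univ i)
  exact Prod.ext ((map_eq_zero_iff _ (polyOfCoeffs_injective Subtype.val_injective)).mp hpi)
    ((map_eq_zero_iff _ (polyOfCoeffs_injective Subtype.val_injective)).mp hvi)

theorem exists_linearMap_sqSubMulSq_pos
    (hd : ∀ α ∈ 𝒯, f.totalDegree + 2 * α.degree ≤ 2 * d) (hf : ¬ RSOS n 𝒯 f) :
    ∃ L : MvPolynomial (Fin n) ℝ →ₗ[ℝ] ℝ, ∀ z ≠ 0, 0 < L (sqSubMulSq d 𝒯 f z) := by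
  let coeffs : MvPolynomial (Fin n) ℝ →ₗ[ℝ] (Idx n (2 * d) → ℝ) :=
    .pi fun γ => lcoeff ℝ γ.1
  have coeffs_injective {p : MvPolynomial (Fin n) ℝ} (hp : p.totalDegree ≤ 2 * d)
      (h : coeffs p = 0) : p = 0 := by
    ext γ
    by_contra hγ
    exact hγ (congrFun h ⟨γ, (le_totalDegree (mem_support_iff.mpr hγ)).trans hp⟩)
  obtain ⟨φ, hφ⟩ := exists_forall_pos_of_sum_eq_zero (q := fun z => coeffs (sqSubMulSq d 𝒯 f z))
    (continuous_pi fun γ => continuous_linearMap_sqSubMulSq (lcoeff ℝ γ.1))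
    (fun c z => by rw [sqSubMulSq_smul, map_smul])
    fun k z hz => eq_zero_of_sum_sqSubMulSq_eq_zero hf <| coeffs_injective
      (totalDegree_finsetSum_le fun i _ => totalDegree_sqSubMulSq_le hd (z i))
      (by rwa [map_sum])
  exact ⟨φ.toLinearMap ∘ₗ coeffs, hφ⟩

theorem exists_posDef_moments (hd : ∀ α ∈ 𝒯, f.totalDegree + 2 * α.degree ≤ 2 * d)
    (hf : ¬ RSOS n 𝒯 f) : ∃ y : (Fin n →₀ ℕ) → ℝ,
      (momentMatrix n d y).PosDef ∧ (-locMomentMatrixOn n 𝒯 f y).PosDef := by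
  obtain ⟨L, hL⟩ := exists_linearMap_sqSubMulSq_pos hd hf
  refine ⟨fun α => L (monomial α 1), ?_, ?_⟩
  · rw [momentMatrix_eq_momentForm, rieszFunctional_apply_monomial]
    refine .of_dotProduct_mulVec_pos momentForm_isHermitian fun x hx => ?_
    simpa [dotProduct_momentForm_mulVec, sqSubMulSq] using hL (x, 0) (by simpa)
  · rw [neg_locMomentMatrixOn_eq_momentForm, rieszFunctional_apply_monomial]
    refine .of_dotProduct_mulVec_pos momentForm_isHermitian fun x hx => ?_
    simpa [dotProduct_momentForm_mulVec, sqSubMulSq] using hL (0, x) (by simpa)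

theorem exists_rat_posDef_moments {y : (Fin n →₀ ℕ) → ℝ} (hM : (momentMatrix n d y).PosDef)
    (hN : (-locMomentMatrixOn n 𝒯 f y).PosDef) : ∃ yhat : (Fin n →₀ ℕ) → ℚ,
      (momentMatrix n d fun α => (yhat α : ℝ)).PosDef ∧
        (-locMomentMatrixOn n 𝒯 f fun α => (yhat α : ℝ)).PosDef := by
  have hcontM : Continuous (momentMatrix n d) :=
    continuous_matrix fun α β => continuous_apply (α.1 + β.1)
  have hcontN : Continuous (locMomentMatrixOn n 𝒯 f) := continuous_matrix fun α β => by
    unfold locMomentMatrixOn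
    fun_prop
  have hnear : ∀ᶠ x in 𝓝 y, (momentMatrix n d x).PosDef ∧ (-locMomentMatrixOn n 𝒯 f x).PosDef :=
    (eventually_posDef hcontM.continuousAt
      (fun x => momentMatrix_eq_momentForm d x ▸ momentForm_isHermitian) hM).and
    (eventually_posDef hcontN.neg.continuousAt
      (fun x => neg_locMomentMatrixOn_eq_momentForm 𝒯 f x ▸ momentForm_isHermitian) hN)
  have hdense : DenseRange (Pi.map fun (_ : Fin n →₀ ℕ) => ((↑) : ℚ → ℝ)) :=
    .piMap fun _ => Rat.denseRange_cast
  obtain ⟨_, ⟨yhat, rfl⟩, hx⟩ := hdense.inter_nhds_nonempty hnear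
  exact ⟨yhat, hx⟩

end Certificates

theorem statement3_general {n d : ℕ} {𝒯 : Finset (Fin n →₀ ℕ)} {f : MvPolynomial (Fin n) ℝ}
    (hd : ∀ α ∈ 𝒯, f.totalDegree + 2 * α.degree ≤ 2 * d) :
    ¬ RSOS n 𝒯 f ↔ ∃ yhat : (Fin n →₀ ℕ) → ℚ,
      (momentMatrix n d fun α => (yhat α : ℝ)).PosSemidef ∧
        (-locMomentMatrixOn n 𝒯 f fun α => (yhat α : ℝ)).PosDef := by
  refine ⟨fun hf => ?_, fun ⟨_, hM, hN⟩ => not_rsos_of_moments hd hM hN⟩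
  obtain ⟨y, hM, hN⟩ := exists_posDef_moments hd hf
  obtain ⟨yhat, hMq, hNq⟩ := exists_rat_posDef_moments hM hN
  exact ⟨yhat, hMq.posSemidef, hNq⟩

/-- for `f ∈ ℚ[X]` and `d = e + ⌈deg f / 2⌉`, `f ∉ RSOS(𝒯)` iff
there is a rational sequence `ŷ` (indexed by multi-indices of degree `≤ 2d`; here
defined on all multi-indices) with `M_d(ŷ) ⪰ 0` and `M_e(fŷ)` (indexed by the
exponents of the monomials in `𝒯`) negative definite. -/
theorem statement3 (n e : ℕ) (f : MvPolynomial (Fin n) ℚ)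
    (𝒯 : Finset (Fin n →₀ ℕ)) (h𝒯 : ∀ α ∈ 𝒯, α.degree ≤ e) :
    ¬ RSOS n 𝒯 (f.map (algebraMap ℚ ℝ)) ↔
      ∃ yhat : (Fin n →₀ ℕ) → ℚ,
        (momentMatrix n (e + (f.totalDegree + 1) / 2)
          (fun α => (yhat α : ℝ))).PosSemidef ∧
        (-(locMomentMatrixOn n 𝒯 (f.map (algebraMap ℚ ℝ))
          (fun α => (yhat α : ℝ)))).PosDef :=
  statement3_general fun α hα => by
    have hdeg : (f.map (algebraMap ℚ ℝ)).totalDegree ≤ f.totalDegree :=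
      Finset.sup_mono (support_map_subset _ _)
    have := h𝒯 α hα
    omega
end

section
/- Let f, g ∈ ℝ[X₁,…,Xₙ] with g ≠ 0, let e ≥ 0 be an integer, set d = e + ⌈(deg(f) − deg(g))/2⌉, and let 𝒯 be a subset of the set of monomials of total degree ≤ e. Then f/g ∈ RSOS(𝒯) if and only if there exist real symmetric positive semidefinite matrices W¹ (rows and columns indexed by the exponent multi-indices of degree ≤ d) and W² (rows and columns indexed by the exponents of the monomials in 𝒯) with trace(W²) = 1 such that the polynomial identity g(X)·Σ_{α,β} W¹_{α,β} X^{α+β} = f(X)·Σ_{γ,δ} W²_{γ,δ} X^{γ+δ} holds. -/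
open MvPolynomial

/-- `d = e + ⌈(deg f − deg g)/2⌉` (clamped at `e` when `deg f < deg g`). -/
def fracDeg (n e : ℕ) (f g : MvPolynomial (Fin n) ℝ) : ℕ :=
  e + ((f.totalDegree : ℤ) - (g.totalDegree : ℤ) + 1).toNat / 2

/-!
A polynomial is a sum of squares of combinations of the monomials `X^{aᵢ}` exactly when it is
`Σᵢⱼ Wᵢⱼ X^{aᵢ + aⱼ}` for a positive semidefinite Gram matrix `W = BᵀB`: the rows of `B` are the
coefficient vectors of the squared polynomials. Since leading terms of squares of real polynomials
cannot cancel, `f · Σⱼ vⱼ² = g · Σᵢ uᵢ²` forces `2 deg uᵢ ≤ deg f - deg g + 2e`, so the `uᵢ` only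
involve monomials of degree at most `d`. The condition `Σⱼ vⱼ² ≠ 0` says that the Gram matrix `W²`
is nonzero, i.e. has positive trace, and scaling both Gram matrices makes that trace `1`.
-/

section SumOfSquares

open scoped MonomialOrder

variable {σ κ R : Type*} [Fintype κ]

theorem coeff_sum_sq_of_degree_le [CommSemiring R] (m : MonomialOrder σ)
    {u : κ → MvPolynomial σ R} {δ : σ →₀ ℕ} (hδ : ∀ k, m.degree (u k) ≼[m] δ) :
    (∑ k, u k ^ 2).coeff (δ + δ) = ∑ k, (u k).coeff δ ^ 2 := by
  simp only [coeff_sum, sq, m.coeff_mul_of_add_of_degree_le (hδ _) (hδ _)]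

variable [CommRing R] [LinearOrder R] [IsStrictOrderedRing R]

theorem eq_zero_of_sum_sq_eq_zero_s8 {u : κ → MvPolynomial σ R} (h : ∑ k, u k ^ 2 = 0) (k : κ) :
    u k = 0 := by
  refine MvPolynomial.funext fun x => ?_
  have heval : ∑ k, eval x (u k) ^ 2 = 0 := by simpa using congrArg (eval x) h
  have hsq := (Finset.sum_eq_zero_iff_of_nonneg fun i _ => sq_nonneg (eval x (u i))).mp heval
  simpa using hsq k (Finset.mem_univ k)

theorem degree_add_self_le_degree_sum_sq (m : MonomialOrder σ) (u : κ → MvPolynomial σ R)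
    (k : κ) : m.degree (u k) + m.degree (u k) ≼[m] m.degree (∑ k, u k ^ 2) := by
  have : Nonempty κ := ⟨k⟩
  obtain ⟨j, hmax⟩ := Finite.exists_max fun i => m.toSyn (m.degree (u i))
  have hkj : m.degree (u k) + m.degree (u k) ≼[m] m.degree (u j) + m.degree (u j) := by
    simpa only [map_add] using add_le_add (hmax k) (hmax k)
  refine hkj.trans ?_
  by_cases hj : u j = 0
  · simp [hj]
  apply m.le_degree
  rw [mem_support_iff, coeff_sum_sq_of_degree_le m hmax]
  have hlead : 0 < (u j).coeff (m.degree (u j)) ^ 2 :=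
    sq_pos_of_ne_zero (m.leadingCoeff_ne_zero_iff.mpr hj)
  exact (Finset.sum_pos' (fun i _ => sq_nonneg ((u i).coeff _)) ⟨j, Finset.mem_univ j, hlead⟩).ne'

theorem two_mul_totalDegree_le_totalDegree_sum_sq_s8 (u : κ → MvPolynomial σ R) (k : κ) :
    2 * (u k).totalDegree ≤ (∑ k, u k ^ 2).totalDegree := by
  -- The degree-lexicographic order needs an order on the variables; any co-well-order will do.
  obtain ⟨_, _⟩ := exists_wellFoundedGT σ
  let m : MonomialOrder σ := .degLex
  calc
    2 * (u k).totalDegree = (m.degree (u k) + m.degree (u k)).degree := by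
      rw [map_add, degree_degLexDegree, two_mul]
    _ ≤ (m.degree (∑ k, u k ^ 2)).degree :=
      Finsupp.DegLex.monotone_degree (degree_add_self_le_degree_sum_sq m u k)
    _ = (∑ k, u k ^ 2).totalDegree := degree_degLexDegree

end SumOfSquares

section IsSOSOn

variable {σ R : Type*}

/-- `p` is a sum of squares of polynomials all of whose exponents lie in `s`. -/
def IsSOSOn [CommSemiring R] (s : Set (σ →₀ ℕ)) (p : MvPolynomial σ R) : Prop :=
  ∃ (l : ℕ) (u : Fin l → MvPolynomial σ R), (∀ i, u i ∈ restrictSupport R s) ∧ p = ∑ i, u i ^ 2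

theorem mem_restrictSupport_degree_le_iff [CommSemiring R] {p : MvPolynomial σ R} {d : ℕ} :
    p ∈ restrictSupport R {α | α.degree ≤ d} ↔ p.totalDegree ≤ d :=
  mem_restrictTotalDegree σ d p

theorem isSOSOn_sum_sq [CommSemiring R] {κ : Type*} [Fintype κ] {s : Set (σ →₀ ℕ)}
    {u : κ → MvPolynomial σ R} (hu : ∀ k, u k ∈ restrictSupport R s) : IsSOSOn s (∑ k, u k ^ 2) :=
  ⟨Fintype.card κ, u ∘ (Fintype.equivFin κ).symm, fun _ => hu _,
    ((Fintype.equivFin κ).symm.sum_comp fun k => u k ^ 2).symm⟩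

theorem IsSOSOn.mono [CommSemiring R] {s t : Set (σ →₀ ℕ)} (hst : s ⊆ t) {p : MvPolynomial σ R} :
    IsSOSOn s p → IsSOSOn t p := by
  rintro ⟨l, u, hu, rfl⟩
  exact ⟨l, u, fun i => restrictSupport_mono R hst (hu i), rfl⟩

theorem IsSOSOn.totalDegree_le [CommSemiring R] {p : MvPolynomial σ R} {e : ℕ}
    (hp : IsSOSOn {α | α.degree ≤ e} p) : p.totalDegree ≤ 2 * e := by
  obtain ⟨l, u, hu, rfl⟩ := hp
  exact totalDegree_finsetSum_le fun i _ => (totalDegree_pow _ _).trans <|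
    Nat.mul_le_mul_left 2 (mem_restrictSupport_degree_le_iff.mp (hu i))

theorem IsSOSOn.restrict_degree_le [CommRing R] [LinearOrder R] [IsStrictOrderedRing R]
    {s : Set (σ →₀ ℕ)} {p : MvPolynomial σ R} {d : ℕ} (hp : IsSOSOn s p)
    (hd : p.totalDegree ≤ 2 * d) : IsSOSOn {α | α.degree ≤ d} p := by
  obtain ⟨l, u, -, rfl⟩ := hp
  refine isSOSOn_sum_sq fun i => mem_restrictSupport_degree_le_iff.mpr ?_
  have := two_mul_totalDegree_le_totalDegree_sum_sq_s8 u i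
  omega

end IsSOSOn

section Gram

variable {σ ι κ R : Type*} [Fintype ι] [Fintype κ] [CommSemiring R] {a : ι → σ →₀ ℕ}

/-- The polynomial `Σᵢ cᵢ X^{aᵢ}`, as a linear function of its coefficient vector `c`. -/
noncomputable def monomialCombination (a : ι → σ →₀ ℕ) : (ι → R) →ₗ[R] MvPolynomial σ R :=
  Fintype.linearCombination R fun i => monomial (a i) 1

/-- The polynomial `Σᵢⱼ Wᵢⱼ X^{aᵢ + aⱼ}` with Gram matrix `W` on the monomials `X^{aᵢ}`. -/
noncomputable def gramPoly (a : ι → σ →₀ ℕ) (W : Matrix ι ι R) : MvPolynomial σ R :=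
  ∑ i, ∑ j, monomial (a i + a j) (W i j)

theorem range_monomialCombination (a : ι → σ →₀ ℕ) :
    LinearMap.range (monomialCombination (R := R) a) = restrictSupport R (Set.range a) := by
  rw [monomialCombination, Fintype.range_linearCombination, restrictSupport_eq_span,
    ← Set.range_comp]
  rfl

theorem monomialCombination_injective (ha : Function.Injective a) :
    Function.Injective (monomialCombination (R := R) a) :=
  linearIndependent_iff_injective_fintypeLinearCombination.mp <|
    (basisMonomials σ R).linearIndependent.comp a ha

theorem gramPoly_zero : gramPoly a (0 : Matrix ι ι R) = 0 := by
  simp [gramPoly]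

theorem gramPoly_smul (r : R) (W : Matrix ι ι R) : gramPoly a (r • W) = r • gramPoly a W := by
  simp [gramPoly, Finset.smul_sum, smul_monomial]

theorem gramPoly_transpose_mul_self (B : Matrix κ ι R) :
    gramPoly a (B.transpose * B) = ∑ k, monomialCombination a (B k) ^ 2 := by
  simp only [gramPoly, monomialCombination, Fintype.linearCombination_apply, smul_monomial,
    smul_eq_mul, mul_one, Matrix.mul_apply, Matrix.transpose_apply, map_sum, sq,
    Finset.sum_mul_sum, monomial_mul]
  simp_rw [Finset.sum_comm (s := (Finset.univ : Finset ι)) (t := (Finset.univ : Finset κ))]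

end Gram

section PosSemidef

variable {σ ι : Type*} [Fintype ι] {a : ι → σ →₀ ℕ} {W : Matrix ι ι ℝ}

open scoped MatrixOrder in
theorem exists_eq_transpose_mul_self_of_posSemidef (hW : W.PosSemidef) :
    ∃ B : Matrix ι ι ℝ, W = B.transpose * B := by
  classical
  exact CStarAlgebra.nonneg_iff_eq_star_mul_self.mp hW.nonneg

theorem isSOSOn_range_iff_exists_gramPoly {p : MvPolynomial σ ℝ} :
    IsSOSOn (Set.range a) p ↔ ∃ W : Matrix ι ι ℝ, W.PosSemidef ∧ gramPoly a W = p := by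
  constructor
  · rintro ⟨l, u, hu, rfl⟩
    simp only [← range_monomialCombination, LinearMap.mem_range] at hu
    choose B hB using hu
    refine ⟨(Matrix.of B).transpose * Matrix.of B, Matrix.posSemidef_conjTranspose_mul_self _, ?_⟩
    rw [gramPoly_transpose_mul_self]
    exact Finset.sum_congr rfl fun k _ => congrArg (· ^ 2) (hB k)
  · rintro ⟨W, hW, rfl⟩
    obtain ⟨B, rfl⟩ := exists_eq_transpose_mul_self_of_posSemidef hW
    rw [gramPoly_transpose_mul_self]
    refine isSOSOn_sum_sq fun k => ?_
    rw [← range_monomialCombination]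
    exact LinearMap.mem_range_self _ _

theorem gramPoly_eq_zero_iff (ha : Function.Injective a) (hW : W.PosSemidef) :
    gramPoly a W = 0 ↔ W = 0 := by
  refine ⟨fun h => ?_, fun h => h ▸ gramPoly_zero⟩
  obtain ⟨B, rfl⟩ := exists_eq_transpose_mul_self_of_posSemidef hW
  rw [gramPoly_transpose_mul_self] at h
  have hB : B = 0 := _root_.funext fun k =>
    (map_eq_zero_iff _ (monomialCombination_injective ha)).mp (eq_zero_of_sum_sq_eq_zero_s8 h k)
  rw [hB, Matrix.mul_zero]

theorem exists_isSOSOn_mul_eq_mul_iff_exists_gramPoly {ι' : Type*} [Fintype ι']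
    {b : ι' → σ →₀ ℕ} (hb : Function.Injective b) (f g : MvPolynomial σ ℝ) :
    (∃ p q, IsSOSOn (Set.range a) p ∧ IsSOSOn (Set.range b) q ∧ q ≠ 0 ∧ g * p = f * q) ↔
      ∃ (W₁ : Matrix ι ι ℝ) (W₂ : Matrix ι' ι' ℝ), W₁.PosSemidef ∧ W₂.PosSemidef ∧
        W₂.trace = 1 ∧ g * gramPoly a W₁ = f * gramPoly b W₂ := by
  simp only [isSOSOn_range_iff_exists_gramPoly]
  constructor
  · rintro ⟨_, _, ⟨W₁, hW₁, rfl⟩, ⟨W₂, hW₂, rfl⟩, hq, h⟩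
    have htr : W₂.trace ≠ 0 := by rwa [Ne, hW₂.trace_eq_zero_iff, ← gramPoly_eq_zero_iff hb hW₂]
    have hr : 0 ≤ W₂.trace⁻¹ := inv_nonneg.mpr hW₂.trace_nonneg
    refine ⟨W₂.trace⁻¹ • W₁, W₂.trace⁻¹ • W₂, hW₁.smul hr, hW₂.smul hr, ?_, ?_⟩
    · rw [Matrix.trace_smul, smul_eq_mul, inv_mul_cancel₀ htr]
    · rw [gramPoly_smul, gramPoly_smul, mul_smul_comm, mul_smul_comm, h]
  · rintro ⟨W₁, W₂, hW₁, hW₂, htr, h⟩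
    refine ⟨_, _, ⟨W₁, hW₁, rfl⟩, ⟨W₂, hW₂, rfl⟩, ?_, h⟩
    rw [Ne, gramPoly_eq_zero_iff hb hW₂]
    rintro rfl
    simp at htr

end PosSemidef

section RSOSfrac

variable {n e : ℕ} {f g : MvPolynomial (Fin n) ℝ} {𝒯 : Finset (Fin n →₀ ℕ)}

theorem totalDegree_le_two_mul_fracDeg {p q : MvPolynomial (Fin n) ℝ} (hg : g ≠ 0)
    (hq : q.totalDegree ≤ 2 * e) (h : g * p = f * q) :
    p.totalDegree ≤ 2 * fracDeg n e f g := by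
  by_cases hp : p = 0
  · simp [hp]
  have hdeg : g.totalDegree + p.totalDegree ≤ f.totalDegree + q.totalDegree := by
    rw [← totalDegree_mul_of_isDomain hg hp, h]
    exact totalDegree_mul f q
  unfold fracDeg
  omega

theorem rsosfrac_iff_exists_isSOSOn :
    RSOSfrac n 𝒯 f g ↔
      ∃ p q, IsSOSOn Set.univ p ∧ IsSOSOn (𝒯 : Set (Fin n →₀ ℕ)) q ∧ q ≠ 0 ∧ g * p = f * q := by
  constructor
  · rintro ⟨l, l', u, v, hv, hne, h⟩
    exact ⟨_, _, ⟨l, u, fun _ => Set.subset_univ _, rfl⟩,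
      ⟨l', v, fun j => Finset.coe_subset.mpr (hv j), rfl⟩, hne, h.symm⟩
  · rintro ⟨_, _, ⟨l, u, -, rfl⟩, ⟨l', v, hv, rfl⟩, hne, h⟩
    exact ⟨l, l', u, v, fun j => Finset.coe_subset.mp (hv j), hne, h.symm⟩

theorem rsosfrac_iff_exists_isSOSOn_fracDeg (hg : g ≠ 0) (h𝒯 : ∀ α ∈ 𝒯, α.degree ≤ e) :
    RSOSfrac n 𝒯 f g ↔ ∃ p q, IsSOSOn {α | α.degree ≤ fracDeg n e f g} p ∧
      IsSOSOn (𝒯 : Set (Fin n →₀ ℕ)) q ∧ q ≠ 0 ∧ g * p = f * q := by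
  rw [rsosfrac_iff_exists_isSOSOn]
  constructor
  · rintro ⟨p, q, hp, hq, hne, h⟩
    have hq_deg : q.totalDegree ≤ 2 * e := (hq.mono h𝒯).totalDegree_le
    exact ⟨p, q, hp.restrict_degree_le (totalDegree_le_two_mul_fracDeg hg hq_deg h),
      hq, hne, h⟩
  · rintro ⟨p, q, hp, hrest⟩
    exact ⟨p, q, hp.mono (Set.subset_univ _), hrest⟩

end RSOSfrac

/-- for `g ≠ 0`, `f/g ∈ RSOS(𝒯)` iff there are PSD matrices `W¹`
(indexed by multi-indices of degree `≤ d`) and `W²` (indexed by the exponents of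
the monomials in `𝒯`) with `trace W² = 1` such that
`g · Σ_{α,β} W¹_{α,β} X^{α+β} = f · Σ_{γ,δ} W²_{γ,δ} X^{γ+δ}`. -/
theorem statement8 (n e : ℕ) (f g : MvPolynomial (Fin n) ℝ) (hg : g ≠ 0)
    (𝒯 : Finset (Fin n →₀ ℕ)) (h𝒯 : ∀ α ∈ 𝒯, α.degree ≤ e) :
    RSOSfrac n 𝒯 f g ↔
      ∃ (W₁ : Matrix (Idx n (fracDeg n e f g)) (Idx n (fracDeg n e f g)) ℝ)
        (W₂ : Matrix 𝒯 𝒯 ℝ),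
        W₁.PosSemidef ∧ W₂.PosSemidef ∧ W₂.trace = 1 ∧
        g * (∑ α, ∑ β, monomial (α.1 + β.1) (W₁ α β)) =
          f * ∑ γ, ∑ δ, monomial (γ.1 + δ.1) (W₂ γ δ) := by
  have h_degree_range : {α | α.degree ≤ fracDeg n e f g} =
      Set.range (Subtype.val : Idx n (fracDeg n e f g) → Fin n →₀ ℕ) := Subtype.range_coe.symm
  have h𝒯_range : (𝒯 : Set (Fin n →₀ ℕ)) = Set.range (Subtype.val : 𝒯 → Fin n →₀ ℕ) :=
    Subtype.range_coe.symm
  rw [rsosfrac_iff_exists_isSOSOn_fracDeg hg h𝒯, h_degree_range, h𝒯_range]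
  exact exists_isSOSOn_mul_eq_mul_iff_exists_gramPoly Subtype.val_injective f g
end
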